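/- Let F be a forest on the vertex set [n+1] with l edges, let R be any S-reduction tree with root F, and for 0 ≤ i ≤ l let f_{F,i} be the number of leaves of R whose label has exactly i edges. Then for every positive integer t, #(tP(F) ∩ ℤ^{n+1}) = (−1)^l · Σ_{i=0}^{l} (−1)^i · f_{F,i} · C(t+i, i), where C(t+i, i) is the binomial coefficient. -/

import Mathlib

open scoped BigOperators

namespace RPaper

abbrev Vtype (n : ℕ) := Fin (n+1) → ℝ

abbrev Edge (n : ℕ) := Fin (n+1) × Fin (n+1)

abbrev EdgeSet (n : ℕ) := Finset (Edge n)

/-- The vector `e_i - e_j`. -/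
def ev {n : ℕ} (i j : Fin (n+1)) : Vtype n := Pi.single i 1 - Pi.single j 1

/-- Edges are stored as pairs `(i,j)` with `i < j`. -/
def IsGraph {n : ℕ} (E : EdgeSet n) : Prop := ∀ e ∈ E, e.1 < e.2

/-- The simple graph underlying an edge set. -/
def toSG {n : ℕ} (E : EdgeSet n) : SimpleGraph (Fin (n+1)) :=
  SimpleGraph.fromRel (fun a b => (a, b) ∈ E)

def Acyclic {n : ℕ} (E : EdgeSet n) : Prop := (toSG E).IsAcyclic

def IsForest {n : ℕ} (E : EdgeSet n) : Prop := IsGraph E ∧ Acyclic E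

/-- A tree on the full vertex set `[n+1]`: connected and acyclic. -/
def IsTreeG {n : ℕ} (E : EdgeSet n) : Prop := IsGraph E ∧ (toSG E).IsTree

def Noncrossing {n : ℕ} (E : EdgeSet n) : Prop :=
  ¬ ∃ i j k l : Fin (n+1), i < j ∧ j < k ∧ k < l ∧ (i, k) ∈ E ∧ (j, l) ∈ E

def Alternating {n : ℕ} (E : EdgeSet n) : Prop :=
  ¬ ∃ i j k : Fin (n+1), i < j ∧ j < k ∧ (i, j) ∈ E ∧ (j, k) ∈ E

/-- The positive roots `e_i - e_j`, `i < j`. -/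
def PhiPlus (n : ℕ) : Set (Vtype n) := {v | ∃ i j : Fin (n+1), i < j ∧ v = ev i j}

/-- The cone of nonnegative combinations of the vectors of `E`. -/
def cone {n : ℕ} (E : EdgeSet n) : Set (Vtype n) :=
  {x | ∃ c : Edge n → ℝ, (∀ e, 0 ≤ c e) ∧ x = ∑ e ∈ E, c e • ev e.1 e.2}

def Vbar {n : ℕ} (E : EdgeSet n) : Set (Vtype n) := PhiPlus n ∩ cone E

/-- The root polytope of a graph. -/
def RootPoly {n : ℕ} (E : EdgeSet n) : Set (Vtype n) := convexHull ℝ ({0} ∪ Vbar E)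

/-- The full root polytope `P(A_n^+)`. -/
def FullRootPoly (n : ℕ) : Set (Vtype n) := convexHull ℝ ({0} ∪ PhiPlus n)

/-- Transitive closure: `(i,j)`, `i<j`, whenever there is an increasing path in `E`. -/
def closureT {n : ℕ} (E : EdgeSet n) : Set (Edge n) :=
  {p | p.1 < p.2 ∧ Relation.TransGen (fun a b => a < b ∧ (a, b) ∈ E) p.1 p.2}

/-- Noncrossing alternating spanning trees of the transitive closure of `E`. -/
def NCASpanningTrees {n : ℕ} (E : EdgeSet n) : Set (EdgeSet n) :=
  {F | IsTreeG F ∧ Noncrossing F ∧ Alternating F ∧ ↑F ⊆ closureT E}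

/-- The `t`-th dilate of a set. -/
def dilate {n : ℕ} (t : ℕ) (P : Set (Vtype n)) : Set (Vtype n) := (fun x => (t : ℝ) • x) '' P

/-- Number of lattice points of the `t`-th dilate. -/
noncomputable def latticeCount {n : ℕ} (P : Set (Vtype n)) (t : ℕ) : ℕ :=
  Set.ncard {x ∈ dilate t P | ∀ i, ∃ z : ℤ, x i = (z : ℝ)}

/-- Dimension of the affine span of a set. -/
noncomputable def polyDim {n : ℕ} (P : Set (Vtype n)) : ℕ :=
  Module.finrank ℝ (affineSpan ℝ P).direction

/-- The points `0` and `e_i - e_j`, `(i,j) ∈ F`. -/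
def vertSet {n : ℕ} (F : EdgeSet n) : Set (Vtype n) :=
  {0} ∪ {v | ∃ e ∈ F, v = ev e.1 e.2}

def red1 {n : ℕ} (E : EdgeSet n) (i j k : Fin (n+1)) : EdgeSet n :=
  insert (i, k) (E.erase (j, k))

def red2 {n : ℕ} (E : EdgeSet n) (i j k : Fin (n+1)) : EdgeSet n :=
  insert (i, k) (E.erase (i, j))

def red3 {n : ℕ} (E : EdgeSet n) (i j k : Fin (n+1)) : EdgeSet n :=
  insert (i, k) ((E.erase (i, j)).erase (j, k))

/-- Finite ternary trees with nodes labeled by graphs on `[n+1]`. -/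
inductive SRTree (n : ℕ) : Type
  | leaf : EdgeSet n → SRTree n
  | node : EdgeSet n → SRTree n → SRTree n → SRTree n → SRTree n

namespace SRTree

def root {n : ℕ} : SRTree n → EdgeSet n
  | leaf E => E
  | node E _ _ _ => E

/-- An S-reduction tree: every internal node's children come from a reduction of its
label, and every leaf is labeled by an alternating graph. -/
def Valid {n : ℕ} : SRTree n → Prop
  | leaf E => Alternating E
  | node E t1 t2 t3 =>
      (∃ i j k : Fin (n+1), i < j ∧ j < k ∧ (i, j) ∈ E ∧ (j, k) ∈ E ∧
        t1.root = red1 E i j k ∧ t2.root = red2 E i j k ∧ t3.root = red3 E i j k) ∧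
      t1.Valid ∧ t2.Valid ∧ t3.Valid

/-- Number of leaves labeled by a graph with exactly `k` edges. -/
def leafCount {n : ℕ} (k : ℕ) : SRTree n → ℕ
  | leaf E => if E.card = k then 1 else 0
  | node _ t1 t2 t3 => leafCount k t1 + leafCount k t2 + leafCount k t3

end SRTree

/-!
Write `posMass x` for the sum of the positive coordinates of `x`, and `edgeMonoid E` for the monoid
generated by the roots `e_i - e_j` of the edges of `E`. For a forest `F` with a reduction tree, the
lattice points of `t P(F)` are the points of `edgeMonoid F` of positive mass at most `t`: deleting
an edge of `F` cuts its component in two, and summing the coordinates over one side of the cut reads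
off the coefficient of that edge, so the integer points of the cone have integer coefficients.
Conversely, a point of the monoid of `F` lies in the monoid of an alternating leaf, where no vertex
is both a source and a sink, so that its positive mass is the sum of its coefficients.

Since `(e_i - e_j) + (e_j - e_k) = e_i - e_k`, a reduction splits the monoid of `E` into the union
of the monoids of its first two children, which meet in the monoid of the third, the one with an
edge fewer. Hence `(-1) ^ #E` times the number of points of mass at most `t` is additive along
reductions, and on an alternating leaf with `i` edges it counts the `(t + i).choose i` choices of
nonnegative integer coefficients with sum at most `t`.
-/

open Finset Submodule

section LinearAlgebra

lemma linearIndepOn_insert_of_sub_mem_span {ι K V : Type*} [DivisionRing K] [AddCommGroup V]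
    [Module K V] {v : ι → V} {s : Set ι} {a b : ι} (ha : a ∉ s)
    (h : LinearIndepOn K v (insert a s)) (hab : v b - v a ∈ span K (v '' s)) :
    b ∉ s ∧ LinearIndepOn K v (insert b s) := by
  obtain ⟨hs, hva⟩ := (linearIndepOn_insert ha).1 h
  have hvb : v b ∉ span K (v '' s) := fun hvb => hva ((sub_mem_iff_right _ hvb).1 hab)
  have hb : b ∉ s := fun hb => hvb (subset_span (Set.mem_image_of_mem v hb))
  exact ⟨hb, (linearIndepOn_insert hb).2 ⟨hs, hvb⟩⟩

lemma span_nat_insert_insert_eq_union {M : Type*} [AddCommMonoid M] (a b : M) (s : Set M) :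
    (span ℕ (insert a (insert b s)) : Set M) =
      ↑(span ℕ (insert (a + b) (insert a s))) ∪ ↑(span ℕ (insert (a + b) (insert b s))) := by
  ext x
  simp only [Set.mem_union, SetLike.mem_coe, mem_span_insert]
  constructor
  · rintro ⟨p, _, ⟨q, z, hz, rfl⟩, rfl⟩
    rcases le_total q p with h | h
    · obtain ⟨d, rfl⟩ := Nat.exists_eq_add_of_le h
      exact .inl ⟨q, _, ⟨d, z, hz, rfl⟩, by module⟩
    · obtain ⟨d, rfl⟩ := Nat.exists_eq_add_of_le h
      exact .inr ⟨p, _, ⟨d, z, hz, rfl⟩, by module⟩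
  · rintro (⟨p, _, ⟨q, z, hz, rfl⟩, rfl⟩ | ⟨p, _, ⟨q, z, hz, rfl⟩, rfl⟩)
    · exact ⟨p + q, _, ⟨p, z, hz, rfl⟩, by module⟩
    · exact ⟨p, _, ⟨p + q, z, hz, rfl⟩, by module⟩

lemma eq_of_nsmul_add_eq_nsmul_add {K V : Type*} [DivisionRing K] [CharZero K] [AddCommGroup V]
    [Module K V] {W : Submodule K V} {a y z : V} {p q : ℕ} (ha : a ∉ W) (hy : y ∈ W) (hz : z ∈ W)
    (h : p • a + y = q • a + z) : p = q := by
  have hmem : ((p : K) - q) • a ∈ W := by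
    have : ((p : K) - q) • a = z - y := by
      rw [sub_smul, Nat.cast_smul_eq_nsmul, Nat.cast_smul_eq_nsmul, sub_eq_sub_iff_add_eq_add, h,
        add_comm]
    exact this ▸ W.sub_mem hz hy
  by_contra hpq
  exact ha ((W.smul_mem_iff (sub_ne_zero.2 (Nat.cast_injective.ne hpq))).1 hmem)

lemma span_nat_insert_add_eq_inter {K V : Type*} [DivisionRing K] [CharZero K] [AddCommGroup V]
    [Module K V] {a b : V} {s : Set V} (ha : a ∉ span K (insert b s))
    (hb : b ∉ span K (insert a s)) :
    (span ℕ (insert (a + b) s) : Set V) =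
      ↑(span ℕ (insert (a + b) (insert a s))) ∩ ↑(span ℕ (insert (a + b) (insert b s))) := by
  refine subset_antisymm (Set.subset_inter (span_mono ?_) (span_mono ?_)) ?_
  · exact Set.insert_subset_insert (Set.subset_insert _ _)
  · exact Set.insert_subset_insert (Set.subset_insert _ _)
  rintro x ⟨hxa, hxb⟩
  simp only [SetLike.mem_coe, mem_span_insert] at hxa hxb ⊢
  obtain ⟨p, _, ⟨q, y, hy, rfl⟩, rfl⟩ := hxa
  obtain ⟨p', _, ⟨q', z, hz, rfl⟩, h⟩ := hxb
  have mem_span_insert_of_mem {w c : V} (r : ℕ) (hw : w ∈ span ℕ s) :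
      r • c + w ∈ span K (insert c s) :=
    add_mem (nsmul_mem (subset_span (Set.mem_insert _ _)) _)
      (span_mono (Set.subset_insert _ _) (span_subset_span ℕ K s hw))
  have hpq : p + q = p' := eq_of_nsmul_add_eq_nsmul_add ha (mem_span_insert_of_mem p hy)
    (mem_span_insert_of_mem (p' + q') hz) (by linear_combination (norm := module) h)
  have hpq' : p = p' + q' := eq_of_nsmul_add_eq_nsmul_add hb (mem_span_insert_of_mem (p + q) hy)
    (mem_span_insert_of_mem p' hz) (by linear_combination (norm := module) h)
  obtain rfl : q = 0 := by omega
  exact ⟨p, y, hy, by rw [zero_smul, zero_add]⟩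

lemma sum_smul_mem_of_sum_le_one {ι K V : Type*} [Field K] [LinearOrder K] [IsStrictOrderedRing K]
    [AddCommGroup V] [Module K V] {s : Set V} (hs : Convex K s) (h0 : 0 ∈ s) {u : Finset ι}
    {w : ι → K} {z : ι → V} (hw : ∀ i ∈ u, 0 ≤ w i)
    (hw1 : ∑ i ∈ u, w i ≤ 1) (hz : ∀ i ∈ u, z i ∈ s) : ∑ i ∈ u, w i • z i ∈ s := by
  have hmem := hs.sum_mem (t := insertNone u) (w := fun o => o.elim (1 - ∑ i ∈ u, w i) w)
    (z := fun o => o.elim 0 z) (forall_mem_insertNone.2 ⟨sub_nonneg.2 hw1, hw⟩)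
    (by simp [sum_insertNone]) (forall_mem_insertNone.2 ⟨h0, hz⟩)
  simpa [sum_insertNone] using hmem

end LinearAlgebra

section Counting

lemma card_subtype_sum_le (ι : Type*) [Fintype ι] (t : ℕ) :
    Nat.card {c : ι → ℕ // ∑ i, c i ≤ t} = (t + Fintype.card ι).choose (Fintype.card ι) := by
  classical
  let slack : {c : ι → ℕ // ∑ i, c i ≤ t} ≃ {d : Option ι → ℕ // ∑ o, d o = t} :=
    { toFun := fun c => ⟨fun o => o.elim (t - ∑ i, c.1 i) c.1, by
        simpa [Fintype.sum_option] using Nat.sub_add_cancel c.2⟩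
      invFun := fun d => ⟨fun i => d.1 (some i), by
        have := d.2
        rw [Fintype.sum_option] at this
        exact (Nat.le_add_left _ _).trans_eq this⟩
      left_inv := fun c => rfl
      right_inv := fun d => by
        ext (_ | i)
        · have := d.2
          rw [Fintype.sum_option] at this
          simp only [Option.elim_none]
          omega
        · rfl }
  rw [Nat.card_congr (slack.trans (Sym.equivNatSumOfFintype _ _).symm), Nat.card_eq_fintype_card,
    Sym.card_sym_eq_choose, Fintype.card_option, add_right_comm, Nat.add_sub_cancel, add_comm,
    Nat.choose_symm_add]

lemma ncard_sum_nsmul_of_sum_le {ι M : Type*} [Fintype ι] [AddCommMonoid M] {v : ι → M}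
    (hv : LinearIndependent ℕ v) (t : ℕ) :
    {x | ∃ c : ι → ℕ, ∑ i, c i ≤ t ∧ ∑ i, c i • v i = x}.ncard =
      (t + Fintype.card ι).choose (Fintype.card ι) := by
  have hinj : Function.Injective fun c : ι → ℕ => ∑ i, c i • v i :=
    hv.fintypeLinearCombination_injective
  rw [← card_subtype_sum_le]
  exact Set.ncard_image_of_injective {c : ι → ℕ | ∑ i, c i ≤ t} hinj

lemma finite_setOf_int_apply_mem_Icc {ι : Type*} [Finite ι] (a b : ℝ) :
    {x : ι → ℝ | ∀ i, (∃ z : ℤ, x i = z) ∧ x i ∈ Set.Icc a b}.Finite := by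
  refine (Set.Finite.pi' fun _ : ι => (Set.finite_Icc ⌈a⌉ ⌊b⌋).image ((↑) : ℤ → ℝ)).subset ?_
  intro x hx i
  obtain ⟨⟨z, hz⟩, ha, hb⟩ := hx i
  rw [hz] at ha hb
  exact ⟨z, ⟨Int.ceil_le.2 ha, Int.le_floor.2 hb⟩, hz.symm⟩

end Counting

section PosMass

variable {ι : Type*} [Fintype ι]

/-- The total positive mass `∑ v, max (x v) 0` of a vector. It cuts the root polytope out of the
cone, and on the cone of an alternating graph it is the sum of the coefficients. -/
def posMass (x : ι → ℝ) : ℝ := ∑ v, (x v)⁺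

lemma sum_le_posMass (x : ι → ℝ) (s : Finset ι) : ∑ v ∈ s, x v ≤ posMass x :=
  (sum_le_sum fun v _ => le_posPart (x v)).trans
    (sum_le_univ_sum_of_nonneg fun v => posPart_nonneg (x v))

lemma posMass_zero : posMass (0 : ι → ℝ) = 0 := by
  simp [posMass]

lemma posMass_add_le (x y : ι → ℝ) : posMass (x + y) ≤ posMass x + posMass y := by
  rw [posMass, posMass, posMass, ← sum_add_distrib]
  refine sum_le_sum fun v _ => sup_le ?_ ?_
  · exact add_le_add (le_posPart _) (le_posPart _)
  · exact add_nonneg (posPart_nonneg _) (posPart_nonneg _)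

lemma posMass_smul {r : ℝ} (hr : 0 ≤ r) (x : ι → ℝ) : posMass (r • x) = r * posMass x := by
  simp only [posMass, mul_sum, posPart_def, Pi.smul_apply, smul_eq_mul, mul_max_of_nonneg _ _ hr,
    mul_zero]

lemma convexOn_posMass : ConvexOn ℝ Set.univ (posMass : (ι → ℝ) → ℝ) := by
  refine ⟨convex_univ, fun x _ y _ a b ha hb _ => ?_⟩
  rw [smul_eq_mul, smul_eq_mul, ← posMass_smul ha, ← posMass_smul hb]
  exact posMass_add_le _ _

lemma abs_apply_le_posMass {x : ι → ℝ} (hx : ∑ v, x v = 0) (v : ι) : |x v| ≤ posMass x := by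
  classical
  refine abs_le'.2 ⟨by simpa using sum_le_posMass x {v}, ?_⟩
  have hv : -x v = ∑ w ∈ univ.erase v, x w := by
    rw [← add_sum_erase _ _ (mem_univ v)] at hx
    linarith
  exact hv ▸ sum_le_posMass x _

end PosMass

section EdgeVectors

variable {n : ℕ}

/-- The root `e_i - e_j` of an edge `(i, j)`. -/
def edgeVec (e : Edge n) : Vtype n := ev e.1 e.2

lemma edgeVec_add_edgeVec (i j k : Fin (n + 1)) :
    edgeVec (i, j) + edgeVec (j, k) = edgeVec (i, k) := by
  simp [edgeVec, ev]

lemma sum_edgeVec (e : Edge n) (s : Finset (Fin (n + 1))) :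
    ∑ v ∈ s, edgeVec e v = (if e.1 ∈ s then 1 else 0) - (if e.2 ∈ s then 1 else 0) := by
  simp [edgeVec, ev, Pi.single_apply]

lemma posMass_edgeVec_le_one (e : Edge n) : posMass (edgeVec e) ≤ 1 := by
  have hnonneg (i : Fin (n + 1)) : 0 ≤ (Pi.single i 1 : Vtype n) := Pi.single_nonneg.2 zero_le_one
  have hle : edgeVec e ≤ Pi.single e.1 1 := sub_le_self _ (hnonneg e.2)
  calc posMass (edgeVec e) ≤ ∑ v, (Pi.single e.1 1 : Vtype n) v :=
        sum_le_sum fun v _ => sup_le (hle v) (hnonneg e.1 v)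
    _ = 1 := by simp

lemma sum_sum_smul_edgeVec (s : Finset (Fin (n + 1))) (E : EdgeSet n) (c : Edge n → ℝ) :
    ∑ v ∈ s, (∑ e ∈ E, c e • edgeVec e) v =
      ∑ e ∈ E, c e * ((if e.1 ∈ s then 1 else 0) - (if e.2 ∈ s then 1 else 0)) := by
  simp only [Finset.sum_apply, Pi.smul_apply, smul_eq_mul]
  rw [sum_comm]
  simp only [← mul_sum, sum_edgeVec]

lemma posMass_sum_smul_edgeVec_le (E : EdgeSet n) {c : Edge n → ℝ} (hc : ∀ e ∈ E, 0 ≤ c e) :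
    posMass (∑ e ∈ E, c e • edgeVec e) ≤ ∑ e ∈ E, c e := by
  refine (le_sum_of_subadditive posMass posMass_zero.le posMass_add_le _ _).trans ?_
  refine sum_le_sum fun e he => ?_
  rw [posMass_smul (hc e he)]
  exact mul_le_of_le_one_right (hc e he) (posMass_edgeVec_le_one e)

/-- The additive monoid generated by the roots of the edges of `E`, encoded as an `ℕ`-span. -/
def edgeMonoid (E : EdgeSet n) : Submodule ℕ (Vtype n) := span ℕ (edgeVec '' (E : Set (Edge n)))

/-- The points of the edge monoid of positive mass at most `t`; for a forest these are the lattice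
points of the `t`-th dilate of the root polytope. -/
def edgeMonoidLE (E : EdgeSet n) (t : ℕ) : Set (Vtype n) := edgeMonoid E ∩ {x | posMass x ≤ t}

end EdgeVectors

section EdgeMonoid

variable {n : ℕ} {E : EdgeSet n} {x : Vtype n}

lemma mem_edgeMonoid :
    x ∈ edgeMonoid E ↔ ∃ c : Edge n → ℕ, ∑ e ∈ E, (c e : ℝ) • edgeVec e = x := by
  simp only [edgeMonoid, mem_span_image_finset_iff_exists_fun', Nat.cast_smul_eq_nsmul]

lemma exists_int_apply_of_mem_edgeMonoid (hx : x ∈ edgeMonoid E) (v : Fin (n + 1)) :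
    ∃ z : ℤ, x v = z := by
  obtain ⟨c, rfl⟩ := mem_edgeMonoid.1 hx
  refine ⟨∑ e ∈ E, c e * ((if e.1 ∈ ({v} : Finset _) then 1 else 0) -
    (if e.2 ∈ ({v} : Finset _) then 1 else 0)), ?_⟩
  rw [← sum_singleton (fun w => (∑ e ∈ E, (c e : ℝ) • edgeVec e) w), sum_sum_smul_edgeVec]
  push_cast
  rfl

lemma sum_apply_eq_zero_of_mem_edgeMonoid (hx : x ∈ edgeMonoid E) : ∑ v, x v = 0 := by
  obtain ⟨c, rfl⟩ := mem_edgeMonoid.1 hx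
  rw [sum_sum_smul_edgeVec]
  simp

lemma finite_edgeMonoidLE (E : EdgeSet n) (t : ℕ) : (edgeMonoidLE E t).Finite := by
  refine (finite_setOf_int_apply_mem_Icc (-t) t).subset fun x ⟨hx, hxt⟩ v => ?_
  exact ⟨exists_int_apply_of_mem_edgeMonoid hx v, abs_le.1 <|
    (abs_apply_le_posMass (sum_apply_eq_zero_of_mem_edgeMonoid hx) v).trans hxt⟩

end EdgeMonoid

section Alternating

variable {n : ℕ} {A : EdgeSet n}

lemma posMass_sum_smul_edgeVec_of_alternating (hG : IsGraph A) (hA : Alternating A)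
    {c : Edge n → ℝ} (hc : ∀ e ∈ A, 0 ≤ c e) :
    posMass (∑ e ∈ A, c e • edgeVec e) = ∑ e ∈ A, c e := by
  refine (posMass_sum_smul_edgeVec_le A hc).antisymm ?_
  calc ∑ e ∈ A, c e = ∑ v ∈ A.image Prod.fst, (∑ e ∈ A, c e • edgeVec e) v := by
        rw [sum_sum_smul_edgeVec]
        refine sum_congr rfl fun e he => ?_
        have hsnd : e.2 ∉ A.image Prod.fst := fun h => by
          obtain ⟨f, hf, hfe⟩ := mem_image.1 h
          exact hA ⟨e.1, e.2, f.2, hG e he, hfe ▸ hG f hf, he, hfe ▸ hf⟩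
        rw [if_pos (mem_image_of_mem _ he), if_neg hsnd, sub_zero, mul_one]
    _ ≤ _ := sum_le_posMass _ _

lemma edgeMonoidLE_eq_of_alternating (hG : IsGraph A) (hA : Alternating A) (t : ℕ) :
    edgeMonoidLE A t = {x | ∃ c : A → ℕ, ∑ e, c e ≤ t ∧ ∑ e, c e • edgeVec e.1 = x} := by
  ext x
  rw [edgeMonoidLE, Set.mem_inter_iff, SetLike.mem_coe, mem_edgeMonoid, ← exists_and_right]
  -- Every function on `A` is the restriction of a function on all pairs.
  refine .trans (exists_congr fun c => ?_)
    (Subtype.val_injective.surjective_comp_right (γ := ℕ)).exists.symm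
  simp only [Function.comp_apply, sum_coe_sort A c, sum_coe_sort A fun e => (c e : ℝ) • edgeVec e,
    ← Nat.cast_smul_eq_nsmul ℝ]
  rw [and_comm]
  refine and_congr_left ?_
  rintro rfl
  rw [Set.mem_ofPred_eq, posMass_sum_smul_edgeVec_of_alternating hG hA fun e _ => (c e).cast_nonneg]
  norm_cast

lemma ncard_edgeMonoidLE_of_alternating (hG : IsGraph A) (hA : Alternating A)
    (hli : LinearIndepOn ℝ edgeVec (A : Set (Edge n))) (t : ℕ) :
    (edgeMonoidLE A t).ncard = (t + #A).choose #A := by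
  have hli' : LinearIndependent ℕ fun e : A => edgeVec e.1 := hli.restrict_scalars' ℕ
  rw [edgeMonoidLE_eq_of_alternating hG hA, ncard_sum_nsmul_of_sum_le hli', Fintype.card_coe]

end Alternating

section Forest

variable {n : ℕ} {F : EdgeSet n}

lemma exists_cut_of_isForest (hF : IsForest F) {e : Edge n} (he : e ∈ F) :
    ∃ s : Finset (Fin (n + 1)), e.1 ∈ s ∧ e.2 ∉ s ∧ ∀ f ∈ F, f ≠ e → (f.1 ∈ s ↔ f.2 ∈ s) := by
  classical
  have hadj : ∀ f ∈ F, (toSG F).Adj f.1 f.2 := fun f hf =>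
    (SimpleGraph.fromRel_adj _ _ _).2 ⟨(hF.1 f hf).ne, .inl hf⟩
  let G := (toSG F).deleteEdges {s(e.1, e.2)}
  have hbridge : ¬ G.Reachable e.1 e.2 :=
    SimpleGraph.isBridge_iff.1 (SimpleGraph.isAcyclic_iff_forall_adj_isBridge.1 hF.2 (hadj e he))
  refine ⟨({v | G.Reachable e.1 v} : Finset _), by simp, by simpa using hbridge, fun f hf hfe => ?_⟩
  have hfG : G.Adj f.1 f.2 := by
    refine SimpleGraph.deleteEdges_adj.2 ⟨hadj f hf, fun h => ?_⟩
    rcases Sym2.eq_iff.1 (Set.mem_singleton_iff.1 h) with ⟨h1, h2⟩ | ⟨h1, h2⟩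
    · exact hfe (Prod.ext h1 h2)
    · exact (hF.1 e he).not_gt (h1 ▸ h2 ▸ hF.1 f hf)
  simpa using ⟨fun h => h.trans hfG.reachable, fun h => h.trans hfG.reachable.symm⟩

lemma exists_sum_eq_coeff_of_isForest (hF : IsForest F) {e : Edge n} (he : e ∈ F) :
    ∃ s : Finset (Fin (n + 1)), ∀ c : Edge n → ℝ, ∑ v ∈ s, (∑ f ∈ F, c f • edgeVec f) v = c e := by
  obtain ⟨s, h1, h2, hs⟩ := exists_cut_of_isForest hF he
  refine ⟨s, fun c => ?_⟩
  rw [sum_sum_smul_edgeVec, sum_eq_single_of_mem e he]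
  · simp [h1, h2]
  · intro f hf hfe
    simp [hs f hf hfe]

lemma linearIndepOn_edgeVec_of_isForest (hF : IsForest F) :
    LinearIndepOn ℝ edgeVec (F : Set (Edge n)) := by
  refine linearIndepOn_finset_iff.2 fun c hc e he => ?_
  obtain ⟨s, hs⟩ := exists_sum_eq_coeff_of_isForest hF he
  rw [← hs c, hc]
  simp

lemma mem_edgeMonoid_of_isForest (hF : IsForest F) {x : Vtype n} (hx : x ∈ cone F)
    (hint : ∀ v, ∃ z : ℤ, x v = z) : x ∈ edgeMonoid F := by
  obtain ⟨c, hc, rfl⟩ := hx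
  choose z hz using hint
  refine mem_edgeMonoid.2 ⟨fun e => ⌊c e⌋₊, sum_congr rfl fun e he => ?_⟩
  obtain ⟨s, hs⟩ := exists_sum_eq_coeff_of_isForest hF he
  have hcz : c e = (∑ v ∈ s, z v : ℤ) := by
    rw [← hs c, Int.cast_sum]
    exact sum_congr rfl fun v _ => hz v
  lift (∑ v ∈ s, z v) to ℕ using by exact_mod_cast hcz ▸ hc e with m
  simp [hcz, edgeVec]

end Forest

section Reduction

variable {n : ℕ} {E : EdgeSet n} {i j k : Fin (n + 1)}

/-- The pairs `(i, j)` and `(j, k)` with `i < j < k` are edges of `E`, so that `E` can be reduced at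
them. -/
structure ReducibleAt (E : EdgeSet n) (i j k : Fin (n + 1)) : Prop where
  lt_left : i < j
  lt_right : j < k
  mem_left : (i, j) ∈ E
  mem_right : (j, k) ∈ E

/-- A graph whose edges have linearly independent roots. Unlike acyclicity, this is visibly
preserved by reductions. -/
structure IsIndepGraph (E : EdgeSet n) : Prop where
  isGraph : IsGraph E
  linearIndepOn : LinearIndepOn ℝ edgeVec (E : Set (Edge n))

lemma IsForest.isIndepGraph (hE : IsForest E) : IsIndepGraph E :=
  ⟨hE.1, linearIndepOn_edgeVec_of_isForest hE⟩

lemma red3_subset_red1 (E : EdgeSet n) (i j k : Fin (n + 1)) : red3 E i j k ⊆ red1 E i j k :=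
  insert_subset_insert _ (erase_subset_erase _ (erase_subset _ _))

namespace ReducibleAt

section

variable (h : ReducibleAt E i j k)
include h

lemma mem_erase_left : (i, j) ∈ E.erase (j, k) :=
  mem_erase.2 ⟨fun he => h.lt_left.ne (congrArg Prod.fst he), h.mem_left⟩

lemma mem_erase_right : (j, k) ∈ E.erase (i, j) :=
  mem_erase.2 ⟨fun he => h.lt_left.ne' (congrArg Prod.fst he), h.mem_right⟩

lemma isGraph_red1 (hE : IsGraph E) : IsGraph (red1 E i j k) :=
  forall_mem_insert _ _ _ |>.2 ⟨h.lt_left.trans h.lt_right, fun e he => hE e (mem_of_mem_erase he)⟩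

lemma isGraph_red2 (hE : IsGraph E) : IsGraph (red2 E i j k) :=
  forall_mem_insert _ _ _ |>.2 ⟨h.lt_left.trans h.lt_right, fun e he => hE e (mem_of_mem_erase he)⟩

lemma insert_insert_erase_erase :
    insert (i, j) (insert (j, k) ((E.erase (i, j)).erase (j, k))) = E := by
  rw [insert_erase h.mem_erase_right, insert_erase h.mem_left]

lemma red1_eq_insert : red1 E i j k =
    insert (i, k) (insert (i, j) ((E.erase (i, j)).erase (j, k))) := by
  rw [red1, erase_right_comm, insert_erase h.mem_erase_left]

lemma red2_eq_insert : red2 E i j k =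
    insert (i, k) (insert (j, k) ((E.erase (i, j)).erase (j, k))) := by
  rw [red2, insert_erase h.mem_erase_right]

lemma edgeMonoid_eq_union : (edgeMonoid E : Set (Vtype n)) =
    ↑(edgeMonoid (red1 E i j k)) ∪ ↑(edgeMonoid (red2 E i j k)) := by
  conv_lhs => rw [← h.insert_insert_erase_erase]
  rw [h.red1_eq_insert, h.red2_eq_insert]
  simp only [edgeMonoid, coe_insert, Set.image_insert_eq, ← edgeVec_add_edgeVec i j k]
  exact span_nat_insert_insert_eq_union _ _ _

end

variable (h : ReducibleAt E i j k) (hE : IsIndepGraph E)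
include h hE

lemma edgeMonoid_red3_eq_inter : (edgeMonoid (red3 E i j k) : Set (Vtype n)) =
    ↑(edgeMonoid (red1 E i j k)) ∩ ↑(edgeMonoid (red2 E i j k)) := by
  rw [h.red1_eq_insert, h.red2_eq_insert, red3]
  simp only [edgeMonoid, coe_insert, Set.image_insert_eq, ← edgeVec_add_edgeVec i j k]
  refine span_nat_insert_add_eq_inter (K := ℝ) ?_ ?_
  · rw [← Set.image_insert_eq, ← coe_insert, insert_erase h.mem_erase_right, coe_erase]
    exact hE.linearIndepOn.notMem_span h.mem_left
  · rw [← Set.image_insert_eq, ← coe_insert, erase_right_comm, insert_erase h.mem_erase_left,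
      coe_erase]
    exact hE.linearIndepOn.notMem_span h.mem_right

lemma notMem_and_linearIndepOn_red1 : (i, k) ∉ E.erase (j, k) ∧
    LinearIndepOn ℝ edgeVec (red1 E i j k : Set (Edge n)) := by
  rw [red1, coe_insert]
  refine linearIndepOn_insert_of_sub_mem_span (notMem_erase (j, k) E) ?_ ?_
  · rw [← coe_insert, insert_erase h.mem_right]
    exact hE.linearIndepOn
  · rw [← edgeVec_add_edgeVec i j k, add_sub_cancel_right]
    exact subset_span (Set.mem_image_of_mem _ h.mem_erase_left)

lemma notMem_and_linearIndepOn_red2 : (i, k) ∉ E.erase (i, j) ∧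
    LinearIndepOn ℝ edgeVec (red2 E i j k : Set (Edge n)) := by
  rw [red2, coe_insert]
  refine linearIndepOn_insert_of_sub_mem_span (notMem_erase (i, j) E) ?_ ?_
  · rw [← coe_insert, insert_erase h.mem_left]
    exact hE.linearIndepOn
  · rw [← edgeVec_add_edgeVec i j k, add_sub_cancel_left]
    exact subset_span (Set.mem_image_of_mem _ h.mem_erase_right)

lemma isIndepGraph_red1 : IsIndepGraph (red1 E i j k) :=
  ⟨h.isGraph_red1 hE.isGraph, (h.notMem_and_linearIndepOn_red1 hE).2⟩

lemma isIndepGraph_red2 : IsIndepGraph (red2 E i j k) :=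
  ⟨h.isGraph_red2 hE.isGraph, (h.notMem_and_linearIndepOn_red2 hE).2⟩

lemma isIndepGraph_red3 : IsIndepGraph (red3 E i j k) where
  isGraph e he := h.isGraph_red1 hE.isGraph e (red3_subset_red1 E i j k he)
  linearIndepOn := (h.notMem_and_linearIndepOn_red1 hE).2.mono (red3_subset_red1 E i j k)

lemma card_red1 : #(red1 E i j k) = #E := by
  rw [red1, card_insert_of_notMem (h.notMem_and_linearIndepOn_red1 hE).1,
    card_erase_add_one h.mem_right]

lemma card_red2 : #(red2 E i j k) = #E := by
  rw [red2, card_insert_of_notMem (h.notMem_and_linearIndepOn_red2 hE).1,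
    card_erase_add_one h.mem_left]

lemma card_red3_add_one : #(red3 E i j k) + 1 = #E := by
  have hik : (i, k) ∉ (E.erase (i, j)).erase (j, k) := fun he =>
    (h.notMem_and_linearIndepOn_red2 hE).1 (mem_of_mem_erase he)
  rw [red3, card_insert_of_notMem hik, card_erase_add_one h.mem_erase_right,
    card_erase_add_one h.mem_left]

lemma ncard_edgeMonoidLE_add_red3 (t : ℕ) :
    (edgeMonoidLE E t).ncard + (edgeMonoidLE (red3 E i j k) t).ncard =
      (edgeMonoidLE (red1 E i j k) t).ncard + (edgeMonoidLE (red2 E i j k) t).ncard := by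
  have hunion : edgeMonoidLE E t =
      edgeMonoidLE (red1 E i j k) t ∪ edgeMonoidLE (red2 E i j k) t := by
    rw [edgeMonoidLE, h.edgeMonoid_eq_union, Set.union_inter_distrib_right, edgeMonoidLE,
      edgeMonoidLE]
  have hinter : edgeMonoidLE (red3 E i j k) t =
      edgeMonoidLE (red1 E i j k) t ∩ edgeMonoidLE (red2 E i j k) t := by
    rw [edgeMonoidLE, h.edgeMonoid_red3_eq_inter hE, Set.inter_inter_distrib_right, edgeMonoidLE,
      edgeMonoidLE]
  rw [hunion, hinter, Set.ncard_union_add_ncard_inter _ _ (finite_edgeMonoidLE _ _)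
    (finite_edgeMonoidLE _ _)]

lemma neg_one_pow_mul_ncard_edgeMonoidLE (t : ℕ) :
    (-1 : ℤ) ^ #E * (edgeMonoidLE E t).ncard =
      (-1) ^ #(red1 E i j k) * (edgeMonoidLE (red1 E i j k) t).ncard +
      (-1) ^ #(red2 E i j k) * (edgeMonoidLE (red2 E i j k) t).ncard +
      (-1) ^ #(red3 E i j k) * (edgeMonoidLE (red3 E i j k) t).ncard := by
  have hncard := congrArg ((↑) : ℕ → ℤ) (h.ncard_edgeMonoidLE_add_red3 hE t)
  rw [h.card_red1 hE, h.card_red2 hE, ← h.card_red3_add_one hE, pow_succ]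
  push_cast at hncard
  linear_combination -(-1 : ℤ) ^ #(red3 E i j k) * hncard

end ReducibleAt

end Reduction

section ReductionTree

variable {n : ℕ} {R : SRTree n}

lemma SRTree.Valid.sum_leafCount_eq (hR : R.Valid) (hroot : IsIndepGraph R.root) (t : ℕ) {N : ℕ}
    (hN : #R.root < N) :
    ∑ i ∈ range N, (-1) ^ i * (R.leafCount i : ℤ) * ((t + i).choose i : ℤ) =
      (-1) ^ #R.root * (edgeMonoidLE R.root t).ncard := by
  induction R with
  | leaf A =>
    rw [root] at hroot hN ⊢
    rw [ncard_edgeMonoidLE_of_alternating hroot.isGraph hR hroot.linearIndepOn,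
      sum_eq_single_of_mem #A (mem_range.2 hN) fun i _ hi => by simp [leafCount, hi.symm]]
    simp [leafCount]
  | node E R₁ R₂ R₃ ih₁ ih₂ ih₃ =>
    obtain ⟨⟨i, j, k, hij, hjk, hi, hk, e₁, e₂, e₃⟩, hR₁, hR₂, hR₃⟩ := hR
    have h : ReducibleAt E i j k := ⟨hij, hjk, hi, hk⟩
    rw [root] at hroot hN ⊢
    have hc₃ := h.card_red3_add_one hroot
    specialize ih₁ hR₁ (e₁ ▸ h.isIndepGraph_red1 hroot) (e₁ ▸ (h.card_red1 hroot).trans_lt hN)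
    specialize ih₂ hR₂ (e₂ ▸ h.isIndepGraph_red2 hroot) (e₂ ▸ (h.card_red2 hroot).trans_lt hN)
    specialize ih₃ hR₃ (e₃ ▸ h.isIndepGraph_red3 hroot) (by rw [e₃]; omega)
    rw [h.neg_one_pow_mul_ncard_edgeMonoidLE hroot, ← e₁, ← e₂, ← e₃, ← ih₁, ← ih₂, ← ih₃,
      ← sum_add_distrib, ← sum_add_distrib]
    refine sum_congr rfl fun m _ => ?_
    rw [leafCount]
    push_cast
    ring

lemma SRTree.Valid.exists_alternating_mem_edgeMonoid (hR : R.Valid) (hroot : IsGraph R.root)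
    {x : Vtype n} (hx : x ∈ edgeMonoid R.root) :
    ∃ A, IsGraph A ∧ Alternating A ∧ edgeMonoid A ≤ edgeMonoid R.root ∧ x ∈ edgeMonoid A := by
  induction R with
  | leaf A => exact ⟨A, hroot, hR, le_rfl, hx⟩
  | node E R₁ R₂ R₃ ih₁ ih₂ _ =>
    obtain ⟨⟨i, j, k, hij, hjk, hi, hk, e₁, e₂, -⟩, hR₁, hR₂, -⟩ := hR
    have h : ReducibleAt E i j k := ⟨hij, hjk, hi, hk⟩
    have hunion := h.edgeMonoid_eq_union
    rw [← e₁, ← e₂] at hunion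
    rcases hunion.subset hx with hx | hx
    · obtain ⟨A, hG, hA, hle, hxA⟩ := ih₁ hR₁ (e₁ ▸ h.isGraph_red1 hroot) hx
      exact ⟨A, hG, hA, fun y hy => hunion.superset (.inl (hle hy)), hxA⟩
    · obtain ⟨A, hG, hA, hle, hxA⟩ := ih₂ hR₂ (e₂ ▸ h.isGraph_red2 hroot) hx
      exact ⟨A, hG, hA, fun y hy => hunion.superset (.inr (hle hy)), hxA⟩

end ReductionTree

section RootPolytope

variable {n : ℕ} {E : EdgeSet n} {R : SRTree n}

lemma cone_eq_hull (E : EdgeSet n) :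
    cone E = PointedCone.hull ℝ (edgeVec '' (E : Set (Edge n))) := by
  ext x
  rw [SetLike.mem_coe, PointedCone.hull, mem_span_image_finset_iff_exists_fun']
  constructor
  · rintro ⟨c, hc, rfl⟩
    exact ⟨fun e => ⟨c e, hc e⟩, rfl⟩
  · rintro ⟨c, rfl⟩
    exact ⟨fun e => c e, fun e => (c e).2, rfl⟩

lemma edgeMonoid_subset_cone (E : EdgeSet n) : (edgeMonoid E : Set (Vtype n)) ⊆ cone E := by
  rw [cone_eq_hull]
  exact span_subset_span ℕ _ _

lemma rootPoly_subset_cone (E : EdgeSet n) : RootPoly E ⊆ cone E := by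
  refine convexHull_min (Set.union_subset ?_ Set.inter_subset_right) ?_
  all_goals rw [cone_eq_hull]
  · exact Set.singleton_subset_iff.2 (zero_mem _)
  · exact PointedCone.convex _

lemma posMass_le_one_of_mem_rootPoly {x : Vtype n} (hx : x ∈ RootPoly E) : posMass x ≤ 1 := by
  refine (convexHull_min (Set.union_subset ?_ ?_) (convexOn_posMass.convex_le 1) hx).2
  · exact Set.singleton_subset_iff.2 ⟨trivial, posMass_zero.trans_le zero_le_one⟩
  · rintro _ ⟨⟨i, j, -, rfl⟩, -⟩
    exact ⟨trivial, posMass_edgeVec_le_one (i, j)⟩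

lemma mem_edgeMonoidLE_of_mem_dilate (hE : IsForest E) {t : ℕ} {x : Vtype n}
    (hx : x ∈ dilate t (RootPoly E)) (hint : ∀ v, ∃ z : ℤ, x v = z) : x ∈ edgeMonoidLE E t := by
  obtain ⟨y, hy, rfl⟩ := hx
  refine ⟨mem_edgeMonoid_of_isForest hE ?_ hint, ?_⟩
  · have hyc := rootPoly_subset_cone E hy
    rw [cone_eq_hull] at hyc ⊢
    exact smul_mem _ (⟨t, t.cast_nonneg⟩ : {r : ℝ // 0 ≤ r}) hyc
  · rw [Set.mem_ofPred_eq, posMass_smul t.cast_nonneg]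
    exact mul_le_of_le_one_right t.cast_nonneg (posMass_le_one_of_mem_rootPoly hy)

lemma edgeVec_mem_rootPoly {A : EdgeSet n} (hA : IsGraph A) (hAE : edgeMonoid A ≤ edgeMonoid E)
    {e : Edge n} (he : e ∈ A) : edgeVec e ∈ RootPoly E := by
  refine subset_convexHull ℝ _ (.inr ⟨⟨e.1, e.2, hA e he, rfl⟩, edgeMonoid_subset_cone E (hAE ?_)⟩)
  exact subset_span (Set.mem_image_of_mem _ he)

lemma SRTree.Valid.edgeMonoidLE_subset_dilate (hR : R.Valid) (hroot : IsGraph R.root)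
    {t : ℕ} (ht : 0 < t) : edgeMonoidLE R.root t ⊆ dilate t (RootPoly R.root) := by
  rintro x ⟨hx, hxt⟩
  obtain ⟨A, hG, hA, hle, hxA⟩ := hR.exists_alternating_mem_edgeMonoid hroot hx
  obtain ⟨c, rfl⟩ := mem_edgeMonoid.1 hxA
  rw [Set.mem_ofPred_eq, posMass_sum_smul_edgeVec_of_alternating hG hA fun e _ => (c e).cast_nonneg]
    at hxt
  have ht₀ : (t : ℝ) ≠ 0 := Nat.cast_ne_zero.2 ht.ne'
  refine ⟨∑ e ∈ A, (c e / t : ℝ) • edgeVec e, ?_, ?_⟩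
  · refine sum_smul_mem_of_sum_le_one (convex_convexHull ℝ _) (subset_convexHull ℝ _ (.inl rfl))
      (fun e _ => by positivity) ?_ fun e he => edgeVec_mem_rootPoly hG hle he
    rw [← sum_div]
    exact div_le_one_of_le₀ hxt t.cast_nonneg
  · simp only [smul_sum, smul_smul, mul_div_cancel₀ _ ht₀]

lemma SRTree.Valid.latticeCount_rootPoly (hR : R.Valid) (hroot : IsForest R.root)
    {t : ℕ} (ht : 0 < t) : latticeCount (RootPoly R.root) t = (edgeMonoidLE R.root t).ncard := by
  refine congrArg Set.ncard (subset_antisymm ?_ ?_)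
  · exact fun x ⟨hx, hint⟩ => mem_edgeMonoidLE_of_mem_dilate hroot hx hint
  · exact fun x hx => ⟨hR.edgeMonoidLE_subset_dilate hroot.1 ht hx,
      exists_int_apply_of_mem_edgeMonoid hx.1⟩

end RootPolytope

/- STATEMENT 9 -/
theorem stmt9 {n : ℕ} (hn : 1 ≤ n) (F : EdgeSet n) (hF : IsForest F) (l : ℕ)
    (hl : F.card = l) (R : SRTree n) (hR : R.Valid) (hr : R.root = F)
    (t : ℕ) (ht : 0 < t) :
    (latticeCount (RootPoly F) t : ℤ) =
      (-1) ^ l * ∑ i ∈ Finset.range (l + 1),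
        (-1) ^ i * (R.leafCount i : ℤ) * (Nat.choose (t + i) i : ℤ) := by
  subst hl hr
  rw [hR.latticeCount_rootPoly hF ht,
    hR.sum_leafCount_eq hF.isIndepGraph t (Nat.lt_succ_self _), ← mul_assoc, ← mul_pow]
  norm_num

end RPaper
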